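/- Let M be an irreducible n×n row-stochastic matrix with stationary distribution π, and let Q be the maximum entropy RDS measure on maps α : {1,…,n} → {1,…,n}, Q(α) = Π_i M_{i, α(i)}. Then for every pair of states i, j, Σ_{cycles c = (S,σ) with i ∈ S and σ(i) = j} w_c = π_i M_{ij}, where w_c = Q(α : A(α) = c) / E_Q[‖A(α)‖]; equivalently, Q(α : α has a single attractor, i ∈ Per(α) and α(i) = j) = π_i M_{ij} · E_Q[‖A(α)‖]. -/

import Mathlib

open Finset
open scoped Classical

/-!
Let `W i` be the total weight of the maps `α` all of whose orbits visit `i`, and `F i j` the weight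
of those that moreover satisfy `α i = j`. Changing the value of such a map at `i` keeps `i` on every
orbit, so `F i j = W i * M i j`. If every orbit visits `j`, then `j` has exactly one preimage that
is also visited by every orbit, so `∑ i, F i j = W j`; hence `W` is a stationary vector of `M`. If
`W m ≠ 0`, then `m` is reachable from everywhere, so `W m • π - π m • W`, a stationary vector
vanishing at `m`, is zero. Therefore `W i = π i * ∑ x, W x`, where `∑ x, W x = E_Q[‖A(α)‖]`.
-/

open Function Matrix

section Dynamics

variable {ι : Type*} {α : ι → ι} {i j : ι}

/-- The point `i` lies on an attractor that is reached from everywhere: every orbit of `α` visits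
`i`. On a finite type this says that `α` has a single attractor and `i` lies on it. -/
def IsAttracting (α : ι → ι) (i : ι) : Prop := ∀ x, ∃ k, α^[k] x = i

/-- All periodic points of `α` lie on one cycle; a map without periodic points is included. -/
def HasSingleAttractor (α : ι → ι) : Prop :=
  ∀ x ∈ periodicPts α, ∀ y ∈ periodicPts α, ∃ k, α^[k] x = y

theorem exists_iterate_mem_periodicPts [Finite ι] (α : ι → ι) (x : ι) :
    ∃ k, α^[k] x ∈ periodicPts α := by
  obtain ⟨k, l, hne, heq⟩ := Finite.exists_ne_map_eq_of_infinite (fun k : ℕ => α^[k] x)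
  wlog hlt : k < l generalizing k l
  · exact this l k hne.symm heq.symm (by omega)
  refine ⟨k, mk_mem_periodicPts (Nat.sub_pos_of_lt hlt) ?_⟩
  rw [IsPeriodicPt, IsFixedPt, ← iterate_add_apply, Nat.sub_add_cancel hlt.le]
  exact heq.symm

namespace IsAttracting

theorem mem_periodicPts (h : IsAttracting α i) : i ∈ periodicPts α := by
  obtain ⟨k, hk⟩ := h (α i)
  exact mk_mem_periodicPts k.succ_pos hk

theorem iterate (h : IsAttracting α i) (k : ℕ) : IsAttracting α (α^[k] i) := by
  intro x
  obtain ⟨l, rfl⟩ := h x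
  exact ⟨k + l, iterate_add_apply α k l x⟩

theorem of_mem_periodicPts (h : IsAttracting α i) (hj : j ∈ periodicPts α) :
    IsAttracting α j := by
  obtain ⟨k, rfl⟩ := h j
  obtain ⟨p, hp, hpj⟩ := Function.mem_periodicPts.1 hj
  have hback : α^[p * k - k] (α^[k] j) = j := by
    rw [← iterate_add_apply, Nat.sub_add_cancel (Nat.le_mul_of_pos_left k hp)]
    exact hpj.mul_const k
  simpa only [hback] using h.iterate (p * k - k)

theorem hasSingleAttractor (h : IsAttracting α i) : HasSingleAttractor α :=
  fun x _ _ hy => h.of_mem_periodicPts hy x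

theorem existsUnique_apply_eq (h : IsAttracting α j) :
    ∃! i, IsAttracting α i ∧ α i = j := by
  obtain ⟨k, hk⟩ := h (α j)
  have hpre : α (α^[k] j) = j := by rwa [← iterate_succ_apply' α, iterate_succ_apply]
  refine ⟨α^[k] j, ⟨h.iterate k, hpre⟩, fun i ⟨hi, hij⟩ => ?_⟩
  exact (bijOn_periodicPts α).injOn hi.mem_periodicPts (h.iterate k).mem_periodicPts
    (hij.trans hpre.symm)

theorem of_rank_lt {β : Type*} [Preorder β] [WellFoundedLT β] (rank : ι → β)
    (h : ∀ x, x ≠ i → rank (α x) < rank x) : IsAttracting α i := by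
  intro x
  induction x using (InvImage.wf rank wellFounded_lt).induction with
  | _ x ih =>
    by_cases hx : x = i
    · exact ⟨0, hx⟩
    · obtain ⟨k, hk⟩ := ih (α x) (h x hx)
      exact ⟨k + 1, hk⟩

theorem update [DecidableEq ι] (h : IsAttracting α i) (j : ι) :
    IsAttracting (Function.update α i j) i := by
  intro x
  obtain ⟨k, hk⟩ := h x
  induction k generalizing x with
  | zero => exact ⟨0, hk⟩
  | succ k ih =>
    by_cases hx : x = i
    · exact ⟨0, hx⟩
    · obtain ⟨l, hl⟩ := ih (α x) hk
      exact ⟨l + 1, by rw [iterate_succ_apply, update_of_ne hx, hl]⟩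

end IsAttracting

theorem isAttracting_iff [Finite ι] :
    IsAttracting α i ↔ HasSingleAttractor α ∧ i ∈ periodicPts α := by
  refine ⟨fun h => ⟨h.hasSingleAttractor, h.mem_periodicPts⟩, fun ⟨h, hi⟩ x => ?_⟩
  obtain ⟨k, hk⟩ := exists_iterate_mem_periodicPts α x
  obtain ⟨l, hl⟩ := h _ hk i hi
  exact ⟨l + k, by rw [iterate_add_apply, hl]⟩

end Dynamics

section Cycles

variable {ι : Type*} {α : ι → ι} {c : Finset ι × Equiv.Perm ι}

/-- The pair `c = (S, σ)` is a cycle. A cyclic permutation of `S` is encoded as a permutation of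
the whole type fixing the complement of `S`, which makes `σ` unique. -/
def IsCyclePair (c : Finset ι × Equiv.Perm ι) : Prop :=
  c.1.Nonempty ∧ (∀ x ∉ c.1, c.2 x = x) ∧ ∀ x ∈ c.1, ∀ y ∈ c.1, ∃ k, c.2^[k] x = y

/-- The relation `A(α) = c` between a map `α` and a cycle `c = (S, σ)`. -/
def IsAttractorOf (α : ι → ι) (c : Finset ι × Equiv.Perm ι) : Prop :=
  periodicPts α = c.1 ∧ ∀ x ∈ c.1, α x = c.2 x

/-- The permutation that agrees with `α` on its periodic points and fixes all other points. -/
noncomputable def periodicPerm (α : ι → ι) : Equiv.Perm ι :=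
  Equiv.Perm.ofSubtype (p := (· ∈ periodicPts α)) ((bijOn_periodicPts α).equiv α)

/-- The periodic points of `α`, paired with the permutation `α` induces on them. When `α` has a
single attractor, this is the cycle `A(α)`. -/
noncomputable def attractor [Fintype ι] (α : ι → ι) : Finset ι × Equiv.Perm ι :=
  ((periodicPts α).toFinset, periodicPerm α)

/-- The number `‖A(α)‖` of points on the attractor of `α`, set to `0` unless `α` has a single
attractor. -/
noncomputable def attractorSize [Fintype ι] (α : ι → ι) : ℕ :=
  if HasSingleAttractor α then #(periodicPts α).toFinset else 0

theorem periodicPerm_apply_of_mem {x : ι} (hx : x ∈ periodicPts α) : periodicPerm α x = α x :=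
  Equiv.Perm.ofSubtype_apply_of_mem (p := (· ∈ periodicPts α)) _ hx

theorem periodicPerm_apply_of_notMem {x : ι} (hx : x ∉ periodicPts α) : periodicPerm α x = x :=
  Equiv.Perm.ofSubtype_apply_of_not_mem (p := (· ∈ periodicPts α)) _ hx

theorem eq_periodicPerm_iff {σ : Equiv.Perm ι} :
    σ = periodicPerm α ↔
      (∀ x ∉ periodicPts α, σ x = x) ∧ ∀ x ∈ periodicPts α, α x = σ x := by
  refine ⟨?_, fun ⟨hfix, heq⟩ => Equiv.ext fun x => ?_⟩
  · rintro rfl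
    exact ⟨fun x hx => periodicPerm_apply_of_notMem hx,
      fun x hx => (periodicPerm_apply_of_mem hx).symm⟩
  · by_cases hx : x ∈ periodicPts α
    · rw [periodicPerm_apply_of_mem hx, heq x hx]
    · rw [periodicPerm_apply_of_notMem hx, hfix x hx]

theorem eqOn_iterate_of_mapsTo {f g : ι → ι} {s : Set ι} (hmaps : Set.MapsTo f s s)
    (h : Set.EqOn f g s) (k : ℕ) : Set.EqOn f^[k] g^[k] s := by
  induction k with
  | zero => exact fun x _ => rfl
  | succ k ih =>
    intro x hx
    rw [iterate_succ_apply, iterate_succ_apply, ih (hmaps hx), h hx]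

theorem IsAttractorOf.hasSingleAttractor_iff (h : IsAttractorOf α c) :
    HasSingleAttractor α ↔ ∀ x ∈ c.1, ∀ y ∈ c.1, ∃ k, c.2^[k] x = y := by
  obtain ⟨hper, heq⟩ := h
  have hmaps : Set.MapsTo α c.1 c.1 := hper ▸ (bijOn_periodicPts α).mapsTo
  have hiter : ∀ k, ∀ x ∈ c.1, α^[k] x = c.2^[k] x := eqOn_iterate_of_mapsTo hmaps heq
  simp only [HasSingleAttractor, hper, SetLike.mem_coe]
  exact forall₂_congr fun x hx => by simp only [hiter _ x hx]

theorem isCyclePair_and_isAttractorOf_iff [Fintype ι] [Nonempty ι] :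
    IsCyclePair c ∧ IsAttractorOf α c ↔ HasSingleAttractor α ∧ c = attractor α := by
  constructor
  · rintro ⟨⟨-, hfix, hcyc⟩, hattr⟩
    refine ⟨hattr.hasSingleAttractor_iff.2 hcyc, ?_⟩
    obtain ⟨hper, heq⟩ := hattr
    refine Prod.ext (by simp [attractor, hper]) (eq_periodicPerm_iff.2 ?_)
    simpa [hper] using And.intro hfix heq
  · rintro ⟨hα, rfl⟩
    obtain ⟨hfix, heq⟩ := eq_periodicPerm_iff.1 (rfl : periodicPerm α = _)
    have hattr : IsAttractorOf α (attractor α) := by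
      simpa [IsAttractorOf, attractor] using heq
    refine ⟨⟨?_, by simpa [attractor] using hfix, hattr.hasSingleAttractor_iff.1 hα⟩, hattr⟩
    obtain ⟨k, hk⟩ := exists_iterate_mem_periodicPts α (Classical.arbitrary ι)
    exact ⟨_, Set.mem_toFinset.2 hk⟩

theorem isCyclePair_through_and_isAttractorOf_iff [Fintype ι] {i j : ι} :
    (IsCyclePair c ∧ i ∈ c.1 ∧ c.2 i = j) ∧ IsAttractorOf α c ↔
      c = attractor α ∧ IsAttracting α i ∧ α i = j := by
  have : Nonempty ι := ⟨i⟩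
  have hmem : i ∈ (attractor α).1 ↔ i ∈ periodicPts α := Set.mem_toFinset
  have hval (hi : i ∈ periodicPts α) : (attractor α).2 i = α i := periodicPerm_apply_of_mem hi
  rw [isAttracting_iff, and_right_comm, isCyclePair_and_isAttractorOf_iff]
  grind

theorem sum_isCyclePair_through {K : Type*} [AddCommMonoid K] [Fintype ι] [DecidableEq ι]
    (f : (ι → ι) → K) (i j : ι) :
    ∑ c : Finset ι × Equiv.Perm ι with IsCyclePair c ∧ i ∈ c.1 ∧ c.2 i = j,
      ∑ α with IsAttractorOf α c, f α = ∑ α with IsAttracting α i ∧ α i = j, f α := by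
  rw [sum_comm' (t' := {α | IsAttracting α i ∧ α i = j}) (s' := fun α => {attractor α})]
  · simp only [sum_singleton]
  · intro c α
    simpa only [mem_filter_univ, mem_singleton] using isCyclePair_through_and_isAttractorOf_iff

end Cycles

section Weights

variable {ι K : Type*} [Fintype ι] [CommSemiring K] (M : Matrix ι ι K)

/-- The weight `Q(α)` of a map under the maximum entropy RDS measure of `M`. -/
def mapWeight (α : ι → ι) : K := ∏ x, M x (α x)

variable [DecidableEq ι]

/-- The expectation `E_Q[‖A(α)‖]` under the weights `Q = mapWeight M`. -/
noncomputable def meanAttractorSize : K := ∑ α, mapWeight M α * attractorSize α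

/-- The total weight of the maps with a single attractor passing through `i`. -/
noncomputable def attractingWeight (i : ι) : K := ∑ α with IsAttracting α i, mapWeight M α

/-- The total weight of the maps with a single attractor traversing the edge from `i` to `j`. -/
noncomputable def fluxWeight (i j : ι) : K :=
  ∑ α with IsAttracting α i ∧ α i = j, mapWeight M α

theorem mapWeight_update_mul (α : ι → ι) (i j : ι) :
    mapWeight M (update α i j) * M i (α i) = mapWeight M α * M i j := by
  simp only [mapWeight, apply_update (fun x => M x)]
  rw [prod_update_of_mem (mem_univ i), prod_eq_mul_prod_sdiff_singleton_of_mem (mem_univ i)]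
  ring

theorem sum_fluxWeight_right (i : ι) : ∑ j, fluxWeight M i j = attractingWeight M i := by
  simp only [fluxWeight, attractingWeight, ← filter_filter]
  exact sum_fiberwise _ (fun α : ι → ι => α i) _

theorem sum_fluxWeight_left (j : ι) : ∑ i, fluxWeight M i j = attractingWeight M j := by
  simp only [fluxWeight, attractingWeight]
  rw [sum_comm' (t' := {α | IsAttracting α j})
    (s' := fun α => ({i | IsAttracting α i ∧ α i = j} : Finset ι))]
  · refine sum_congr rfl fun α hα => ?_
    have hone := (Fintype.existsUnique_iff_card_one _).1
      ((mem_filter_univ α).1 hα).existsUnique_apply_eq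
    rw [sum_const, hone, one_smul]
  · simp only [mem_filter_univ, mem_univ, true_and]
    rintro i α
    exact ⟨fun h => ⟨h, h.2 ▸ h.1.iterate 1⟩, And.left⟩

-- Redirecting `i` from `j` to `k` keeps `i` attracting and changes one factor of the weight.
theorem fluxWeight_mul_comm (i j k : ι) :
    fluxWeight M i j * M i k = fluxWeight M i k * M i j := by
  simp only [fluxWeight, sum_mul]
  refine sum_nbij' (update · i k) (update · i j) ?_ ?_ ?_ ?_ ?_ <;>
    simp only [mem_filter_univ] <;> rintro α ⟨hα, rfl⟩
  · exact ⟨hα.update k, update_self ..⟩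
  · exact ⟨hα.update j, update_self ..⟩
  · simp
  · simp
  · exact (mapWeight_update_mul M α i k).symm

variable {M}

theorem fluxWeight_eq_mul (hM : ∀ i, ∑ j, M i j = 1) (i j : ι) :
    fluxWeight M i j = attractingWeight M i * M i j := by
  rw [← sum_fluxWeight_right, sum_mul, sum_congr rfl fun k _ => fluxWeight_mul_comm M i k j,
    ← mul_sum, hM, mul_one]

theorem attractingWeight_vecMul (hM : ∀ i, ∑ j, M i j = 1) :
    attractingWeight M ᵥ* M = attractingWeight M := by
  ext j
  rw [← sum_fluxWeight_left]
  exact sum_congr rfl fun i _ => (fluxWeight_eq_mul hM i j).symm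

theorem sum_attractingWeight (M : Matrix ι ι K) :
    ∑ i, attractingWeight M i = meanAttractorSize M := by
  simp only [attractingWeight, meanAttractorSize, attractorSize, sum_filter]
  rw [sum_comm]
  refine sum_congr rfl fun α _ => ?_
  simp only [isAttracting_iff, ite_and]
  split_ifs <;> simp [← sum_filter, mul_comm]

end Weights

section Stationary

variable {ι R : Type*} [Fintype ι] [DecidableEq ι] {M : Matrix ι ι R} {u : ι → R} {m : ι}

theorem vecMul_pow_eq_of_vecMul_eq [Semiring R] (hu : u ᵥ* M = u) (k : ℕ) : u ᵥ* M ^ k = u := by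
  induction k with
  | zero => rw [pow_zero, vecMul_one]
  | succ k ih => rw [pow_succ, ← vecMul_vecMul, ih, hu]

variable [Ring R] [LinearOrder R] [IsStrictOrderedRing R]

theorem abs_vecMul_of_vecMul_eq (hM : M ∈ rowStochastic R ι) (hu : u ᵥ* M = u) :
    (fun i => |u i|) ᵥ* M = fun i => |u i| := by
  have hle : ∀ j, |u j| ≤ ∑ i, |u i| * M i j := fun j => calc
    |u j| = |∑ i, u i * M i j| := congrArg abs (congrFun hu j).symm
    _ ≤ ∑ i, |u i * M i j| := abs_sum_le_sum_abs _ _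
    _ = ∑ i, |u i| * M i j := by simp only [abs_mul, abs_of_nonneg (hM.1 _ _)]
  have hsum : ∑ j, |u j| = ∑ j, ∑ i, |u i| * M i j := by
    rw [sum_comm]
    simp only [← mul_sum, sum_row_of_mem_rowStochastic hM, mul_one]
  ext j
  exact ((sum_eq_sum_iff_of_le fun j _ => hle j).1 hsum j (mem_univ j)).symm

theorem eq_zero_of_vecMul_eq_of_apply_eq_zero (hM : M ∈ rowStochastic R ι)
    (hm : ∀ x, ∃ k, 0 < (M ^ k) x m) (hu : u ᵥ* M = u) (hum : u m = 0) : u = 0 := by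
  ext x
  obtain ⟨k, hk⟩ := hm x
  have hMk := pow_mem hM k
  have hsum : ∑ y, |u y| * (M ^ k) y m = 0 :=
    (congrFun (abs_vecMul_of_vecMul_eq hMk (vecMul_pow_eq_of_vecMul_eq hu k)) m).trans
      (abs_eq_zero.2 hum)
  have hterm := (sum_eq_zero_iff_of_nonneg fun y _ => mul_nonneg (abs_nonneg (u y)) (hMk.1 y m)).1
    hsum x (mem_univ x)
  exact abs_eq_zero.1 ((mul_eq_zero.1 hterm).resolve_right hk.ne')

end Stationary

section Positivity

variable {ι R : Type*} [Fintype ι] [DecidableEq ι] [LinearOrder R] {m : ι}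

section Semiring

variable [Semiring R] [IsStrictOrderedRing R] {M : Matrix ι ι R}

theorem exists_pos_of_mem_rowStochastic (hM : M ∈ rowStochastic R ι) (x : ι) :
    ∃ y, 0 < M x y := by
  by_contra! hle
  have h := sum_nonpos fun y (_ : y ∈ univ) => hle y
  rw [sum_row_of_mem_rowStochastic hM] at h
  exact zero_lt_one.not_ge h

theorem exists_pos_of_pow_succ_pos (hM : ∀ i j, 0 ≤ M i j) {x : ι} {k : ℕ}
    (h : 0 < (M ^ (k + 1)) x m) : ∃ y, 0 < M x y ∧ 0 < (M ^ k) y m := by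
  rw [pow_succ', mul_apply] at h
  obtain ⟨y, -, hy⟩ := exists_ne_zero_of_sum_ne_zero h.ne'
  exact ⟨y, (hM x y).lt_of_ne' (left_ne_zero_of_mul hy),
    (pow_apply_nonneg hM k y m).lt_of_ne' (right_ne_zero_of_mul hy)⟩

-- Every state steps towards `m` along a path of minimal length.
theorem exists_isAttracting_forall_pos (hM : M ∈ rowStochastic R ι)
    (hm : ∀ x, ∃ k, 0 < (M ^ k) x m) : ∃ α, IsAttracting α m ∧ ∀ x, 0 < M x (α x) := by
  have hstep : ∀ x, ∃ y, 0 < M x y ∧ (x ≠ m → Nat.find (hm y) < Nat.find (hm x)) := by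
    intro x
    by_cases hx : x = m
    · obtain ⟨y, hy⟩ := exists_pos_of_mem_rowStochastic hM x
      exact ⟨y, hy, fun h => absurd hx h⟩
    · have hpos := Nat.find_spec (hm x)
      cases hk : Nat.find (hm x) with
      | zero => simp [hk, one_apply_ne hx] at hpos
      | succ k =>
        rw [hk] at hpos
        obtain ⟨y, hxy, hym⟩ := exists_pos_of_pow_succ_pos hM.1 hpos
        exact ⟨y, hxy, fun _ => Nat.lt_succ_of_le (Nat.find_min' _ hym)⟩
  choose α hpos hlt using hstep
  exact ⟨α, .of_rank_lt (fun x => Nat.find (hm x)) hlt, hpos⟩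

theorem pow_apply_iterate_pos (hM : ∀ i j, 0 ≤ M i j) {α : ι → ι} (hα : ∀ x, 0 < M x (α x))
    (k : ℕ) (x : ι) : 0 < (M ^ k) x (α^[k] x) := by
  induction k generalizing x with
  | zero => simp
  | succ k ih =>
    rw [pow_succ', mul_apply]
    exact sum_pos' (fun y _ => mul_nonneg (hM x y) (pow_apply_nonneg hM k y _))
      ⟨α x, mem_univ _, mul_pos (hα x) (ih (α x))⟩

end Semiring

section CommSemiring

variable [CommSemiring R] [IsStrictOrderedRing R] {M : Matrix ι ι R}

theorem attractingWeight_nonneg (hM : ∀ i j, 0 ≤ M i j) (i : ι) : 0 ≤ attractingWeight M i :=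
  sum_nonneg fun _ _ => prod_nonneg fun _ _ => hM _ _

theorem attractingWeight_pos_iff (hM : M ∈ rowStochastic R ι) :
    0 < attractingWeight M m ↔ ∀ x, ∃ k, 0 < (M ^ k) x m := by
  refine ⟨fun h x => ?_, fun hm => ?_⟩
  · obtain ⟨α, hα, hne⟩ := exists_ne_zero_of_sum_ne_zero h.ne'
    have hpos : ∀ x, 0 < M x (α x) := fun x =>
      (hM.1 _ _).lt_of_ne' fun h0 => hne (prod_eq_zero (mem_univ x) h0)
    obtain ⟨k, hk⟩ := (mem_filter_univ α).1 hα x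
    exact ⟨k, hk ▸ pow_apply_iterate_pos hM.1 hpos k x⟩
  · obtain ⟨α, hα, hpos⟩ := exists_isAttracting_forall_pos hM hm
    exact sum_pos' (fun _ _ => prod_nonneg fun _ _ => hM.1 _ _)
      ⟨α, (mem_filter_univ α).2 hα, prod_pos fun x _ => hpos x⟩

theorem meanAttractorSize_pos (hM : M ∈ rowStochastic R ι)
    (hm : ∃ m, ∀ x, ∃ k, 0 < (M ^ k) x m) : 0 < meanAttractorSize M := by
  obtain ⟨m, hm⟩ := hm
  rw [← sum_attractingWeight]
  exact sum_pos' (fun x _ => attractingWeight_nonneg hM.1 x)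
    ⟨m, mem_univ m, (attractingWeight_pos_iff hM).2 hm⟩

end CommSemiring

variable [CommRing R] [IsStrictOrderedRing R] {M : Matrix ι ι R}

theorem attractingWeight_eq_mul_meanAttractorSize (hM : M ∈ rowStochastic R ι) {π : ι → R}
    (hπ1 : ∑ i, π i = 1) (hπ : π ᵥ* M = π) (i : ι) :
    attractingWeight M i = π i * meanAttractorSize M := by
  rw [← sum_attractingWeight]
  set W := attractingWeight M
  by_cases hW : W = 0
  · simp [hW]
  obtain ⟨m, hm⟩ := Function.ne_iff.1 hW
  have hWm : 0 < W m := (attractingWeight_nonneg hM.1 m).lt_of_ne' hm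
  have hWstat : W ᵥ* M = W := attractingWeight_vecMul (sum_row_of_mem_rowStochastic hM)
  have hprop : W m • π - π m • W = 0 :=
    eq_zero_of_vecMul_eq_of_apply_eq_zero hM ((attractingWeight_pos_iff hM).1 hWm)
      (by rw [sub_vecMul, smul_vecMul, smul_vecMul, hπ, hWstat]) (by simp [mul_comm])
  have hcross : ∀ x, W m * π x = π m * W x := fun x => sub_eq_zero.1 (congrFun hprop x)
  have hsum : W m = π m * ∑ x, W x := by
    rw [mul_sum, ← sum_congr rfl fun x _ => hcross x, ← mul_sum, hπ1, mul_one]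
  have hπm : π m ≠ 0 := left_ne_zero_of_mul (hsum ▸ hWm.ne')
  refine mul_left_cancel₀ hπm ?_
  rw [← hcross, hsum]
  ring

theorem fluxWeight_eq_mul_meanAttractorSize (hM : M ∈ rowStochastic R ι) {π : ι → R}
    (hπ1 : ∑ i, π i = 1) (hπ : π ᵥ* M = π) (i j : ι) :
    fluxWeight M i j = π i * M i j * meanAttractorSize M := by
  rw [fluxWeight_eq_mul (sum_row_of_mem_rowStochastic hM),
    attractingWeight_eq_mul_meanAttractorSize hM hπ1 hπ]
  ring

end Positivity

section CycleWeight

variable {ι K : Type*} [Fintype ι] [DecidableEq ι] [Field K] {M : Matrix ι ι K}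

/-- The weight `w_c` of the cycle `c`; it takes the junk value `0` when the mean attractor size
vanishes. -/
noncomputable def cycleWeight (M : Matrix ι ι K) (c : Finset ι × Equiv.Perm ι) : K :=
  (∑ α with IsAttractorOf α c, mapWeight M α) / meanAttractorSize M

theorem sum_cycleWeight_through [LinearOrder K] [IsStrictOrderedRing K]
    (hM : M ∈ rowStochastic K ι) (hm : ∃ m, ∀ x, ∃ k, 0 < (M ^ k) x m) {π : ι → K}
    (hπ1 : ∑ i, π i = 1) (hπ : π ᵥ* M = π) (i j : ι) :
    ∑ c with IsCyclePair c ∧ i ∈ c.1 ∧ c.2 i = j, cycleWeight M c = π i * M i j := by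
  simp only [cycleWeight]
  rw [← sum_div, sum_isCyclePair_through, ← fluxWeight,
    fluxWeight_eq_mul_meanAttractorSize hM hπ1 hπ,
    mul_div_cancel_right₀ _ (meanAttractorSize_pos hM hm).ne']

end CycleWeight

theorem cycle_weights_give_stationary_flux_general {ι K : Type*} [Fintype ι] [DecidableEq ι]
    [Field K] [LinearOrder K] [IsStrictOrderedRing K]
    (M : Matrix ι ι K) (hM : M ∈ rowStochastic K ι)
    (π : ι → K) (hπ1 : ∑ i, π i = 1) (hπ : π ᵥ* M = π)
    (Q : (ι → ι) → K) (hQ : ∀ α, Q α = ∏ i, M i (α i))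
    (Per : (ι → ι) → Finset ι)
    (hPer : ∀ α, Per α = Finset.univ.filter fun x => ∃ k, 1 ≤ k ∧ α^[k] x = x)
    (single : (ι → ι) → Prop)
    (hsingle : ∀ α, single α ↔ ∀ x ∈ Per α, ∀ y ∈ Per α, ∃ k, α^[k] x = y)
    (normA : (ι → ι) → K)
    (hnormA : ∀ α, normA α = if single α then ((Per α).card : K) else 0)
    (EQ : K) (hEQ : EQ = ∑ α : ι → ι, Q α * normA α)
    (wc : Finset ι → Equiv.Perm ι → K)
    (hwc : ∀ S σ, wc S σ =
      (∑ α : ι → ι, if (Per α = S ∧ ∀ x ∈ S, α x = σ x) then Q α else 0) / EQ)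
    (i j : ι) :
    ((∃ m, ∀ x, ∃ k, 0 < (M ^ k) x m) →
      (∑ S : Finset ι, ∑ σ : Equiv.Perm ι,
        if (S.Nonempty ∧ (∀ x ∉ S, σ x = x) ∧
            (∀ x ∈ S, ∀ y ∈ S, ∃ k, (⇑σ)^[k] x = y) ∧ i ∈ S ∧ σ i = j)
          then wc S σ else 0) = π i * M i j) ∧
    (∑ α : ι → ι, if (single α ∧ i ∈ Per α ∧ α i = j) then Q α else 0)
      = π i * M i j * EQ := by
  obtain rfl : Per = fun α => (periodicPts α).toFinset := by
    ext α x
    simp [hPer, mem_periodicPts, IsPeriodicPt, IsFixedPt, Nat.succ_le_iff]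
  obtain rfl : single = HasSingleAttractor := by
    ext α
    simp [hsingle, HasSingleAttractor]
  obtain rfl : Q = mapWeight M := funext hQ
  obtain rfl : EQ = meanAttractorSize M := by
    simp [hEQ, hnormA, meanAttractorSize, attractorSize]
  refine ⟨fun hm => ?_, ?_⟩
  · rw [← sum_cycleWeight_through hM hm hπ1 hπ i j, sum_filter, Fintype.sum_prod_type]
    have hweight (S : Finset ι) (σ : Equiv.Perm ι) : wc S σ = cycleWeight M (S, σ) := by
      rw [hwc, cycleWeight, sum_filter]
      refine congrArg (· / _) (sum_congr rfl fun α _ => if_congr ?_ rfl rfl)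
      rw [IsAttractorOf, ← coe_inj, Set.coe_toFinset]
    simp only [hweight, IsCyclePair, and_assoc]
  · rw [← fluxWeight_eq_mul_meanAttractorSize hM hπ1 hπ, fluxWeight, sum_filter]
    simp only [isAttracting_iff, Set.mem_toFinset, and_assoc]

/-- Cycle weights recover the stationary fluxes: for every pair of states i, j,
Σ_{cycles c = (S,σ), i ∈ S, σ(i) = j} w_c = π_i M_{ij}, where
w_c = Q(α : A(α)=c)/E_Q[‖A(α)‖]; equivalently
Q(α single attractor ∧ i ∈ Per α ∧ α(i) = j) = π_i M_{ij} · E_Q[‖A(α)‖]. -/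
theorem cycle_weights_give_stationary_flux (n : ℕ)
    (M : Matrix (Fin n) (Fin n) ℝ)
    (hM0 : ∀ i j, 0 ≤ M i j) (hM1 : ∀ i, ∑ j, M i j = 1)
    (hirr : ∀ i j, ∃ k, 1 ≤ k ∧ 0 < (M ^ k) i j)
    (π : Fin n → ℝ) (hπ0 : ∀ i, 0 ≤ π i) (hπ1 : ∑ i, π i = 1)
    (hπstat : ∀ j, ∑ i, π i * M i j = π j)
    (Q : (Fin n → Fin n) → ℝ) (hQ : ∀ α, Q α = ∏ i, M i (α i))
    (Per : (Fin n → Fin n) → Finset (Fin n))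
    (hPer : ∀ α, Per α = Finset.univ.filter fun x => ∃ k, 1 ≤ k ∧ α^[k] x = x)
    (single : (Fin n → Fin n) → Prop)
    (hsingle : ∀ α, single α ↔ ∀ x ∈ Per α, ∀ y ∈ Per α, ∃ k, α^[k] x = y)
    (normA : (Fin n → Fin n) → ℝ)
    (hnormA : ∀ α, normA α = if single α then ((Per α).card : ℝ) else 0)
    (EQ : ℝ) (hEQ : EQ = ∑ α : Fin n → Fin n, Q α * normA α)
    (wc : Finset (Fin n) → Equiv.Perm (Fin n) → ℝ)
    (hwc : ∀ S σ, wc S σ =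
      (∑ α : Fin n → Fin n, if (Per α = S ∧ ∀ x ∈ S, α x = σ x) then Q α else 0) / EQ)
    (i j : Fin n) :
    (∑ S : Finset (Fin n), ∑ σ : Equiv.Perm (Fin n),
      if (S.Nonempty ∧ (∀ x ∉ S, σ x = x) ∧
          (∀ x ∈ S, ∀ y ∈ S, ∃ k, (⇑σ)^[k] x = y) ∧ i ∈ S ∧ σ i = j)
        then wc S σ else 0) = π i * M i j ∧
    (∑ α : Fin n → Fin n, if (single α ∧ i ∈ Per α ∧ α i = j) then Q α else 0)
      = π i * M i j * EQ := by
  convert (cycle_weights_give_stationary_flux_general M (mem_rowStochastic_iff_sum.2 ⟨hM0, hM1⟩)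
    π hπ1 (funext hπstat) Q hQ Per hPer single hsingle normA hnormA EQ hEQ wc (by convert hwc) i
    j).imp_left (· ⟨i, fun x => (hirr x i).imp fun _ => And.right⟩)
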